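/- arXiv:2407.20226 — 2 statements merged into one kernel-verified Lean document; each statement's English description precedes it below -/
import Mathlib

section
/- Let G be a finite connected simple graph with n vertices, and let H be a connected spanning subgraph of G with H ≠ G. Then P_RD(H;G) = ∑_{e ∈ E(G)∖E(H)} P_RD(H∪e;G) / |(H∪e)°|, where H∪e is the subgraph obtained from H by adding the edge e. -/
open MeasureTheory SimpleGraph
open scoped Classical

noncomputable section

namespace RST

variable {V : Type*}

/-- The i.i.d. uniform-on-`[0,1]` product measure on weight vectors indexed by `E`. -/
def edgeUniform (E : Type*) [Fintype E] : Measure (E → ℝ) :=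
  Measure.pi fun _ => (volume : Measure ℝ).restrict (Set.Icc (0 : ℝ) 1)

/-- The graph on `V` whose edge set is the finset `T`. -/
def spanGraph (T : Finset (Sym2 V)) : SimpleGraph V :=
  SimpleGraph.fromEdgeSet ↑T

/-- `H°`: the set of edges of `H` that are not separating (bridge) edges of `H`. -/
def edgeInterior (H : Finset (Sym2 V)) : Set (Sym2 V) :=
  {e | e ∈ H ∧ ¬(spanGraph H).IsBridge e}

/-- `d` is the nested sequence of connected spanning subgraphs produced by running the
reverse-delete algorithm on `G` with the weights `w` (recorded in deletion order):
start from all of `G` and repeatedly delete the maximum-weight non-separating edge. -/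
def IsRDChain (G : SimpleGraph V) [Fintype V] (w : G.edgeSet → ℝ)
    (d : ℕ → Finset (Sym2 V)) : Prop :=
  d 0 = G.edgeFinset ∧ ∀ k : ℕ,
    ((edgeInterior (d k)).Nonempty →
      ∃ e : G.edgeSet, (e : Sym2 V) ∈ edgeInterior (d k) ∧
        (∀ e' : G.edgeSet, (e' : Sym2 V) ∈ edgeInterior (d k) → w e' ≤ w e) ∧
        d (k + 1) = (d k).erase (e : Sym2 V)) ∧
    (¬(edgeInterior (d k)).Nonempty → d (k + 1) = d k)

/-- `P_RD(H; G)`: the probability, for i.i.d. uniform `[0,1]` weights, that `H` is the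
subgraph remaining after `|E(G)| - |H|` steps of the reverse-delete algorithm on `G`,
i.e. that `H = H_j^w` where `|H| = n - 1 + j`. -/
def rdProb (G : SimpleGraph V) [Fintype V] (H : Finset (Sym2 V)) : ℝ :=
  (edgeUniform G.edgeSet
    {w | ∃ d, IsRDChain G w d ∧ d (G.edgeFinset.card - H.card) = H}).toReal

/-- One step of the reverse-delete algorithm. -/
def RDStep (G : SimpleGraph V) (w : G.edgeSet → ℝ) (A B : Finset (Sym2 V)) : Prop :=
  ((edgeInterior A).Nonempty →
      ∃ e : G.edgeSet, (e : Sym2 V) ∈ edgeInterior A ∧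
        (∀ e' : G.edgeSet, (e' : Sym2 V) ∈ edgeInterior A → w e' ≤ w e) ∧
        B = A.erase (e : Sym2 V)) ∧
    (¬(edgeInterior A).Nonempty → B = A)

/-- `A` can be reached after `k` steps. -/
def RDReach (G : SimpleGraph V) [Fintype V] (w : G.edgeSet → ℝ) : ℕ → Finset (Sym2 V) → Prop
  | 0, A => A = G.edgeFinset
  | k + 1, A => ∃ B, RDReach G w k B ∧ RDStep G w B A

lemma RDStep.cases {G : SimpleGraph V} {w : G.edgeSet → ℝ} {A B : Finset (Sym2 V)}
    (h : RDStep G w A B) : B = A ∨ ∃ e : G.edgeSet, (e : Sym2 V) ∈ edgeInterior A ∧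
        (∀ e' : G.edgeSet, (e' : Sym2 V) ∈ edgeInterior A → w e' ≤ w e) ∧
        B = A.erase (e : Sym2 V) := by
  by_cases hA : (edgeInterior A).Nonempty
  · exact Or.inr (h.1 hA)
  · exact Or.inl (h.2 hA)

lemma RDStep.subset {G : SimpleGraph V} {w : G.edgeSet → ℝ} {A B : Finset (Sym2 V)}
    (h : RDStep G w A B) : B ⊆ A := by
  rcases h.cases with rfl | ⟨e, -, -, rfl⟩
  · exact subset_rfl
  · exact Finset.erase_subset _ _

lemma RDStep.card {G : SimpleGraph V} {w : G.edgeSet → ℝ} {A B : Finset (Sym2 V)}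
    (h : RDStep G w A B) : A.card ≤ B.card + 1 := by
  rcases h.cases with rfl | ⟨e, -, -, rfl⟩
  · omega
  · have := Finset.pred_card_le_card_erase (s := A) (a := (e : Sym2 V))
    omega

lemma RDStep.exists [Fintype V] {G : SimpleGraph V} (w : G.edgeSet → ℝ) {A : Finset (Sym2 V)}
    (hA : A ⊆ G.edgeFinset) : ∃ B, RDStep G w A B := by
  by_cases hne : (edgeInterior A).Nonempty
  · let I : Finset G.edgeSet := Finset.univ.filter fun e => (e : Sym2 V) ∈ edgeInterior A
    have hI : I.Nonempty := by
      obtain ⟨e, he⟩ := hne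
      exact ⟨⟨e, SimpleGraph.mem_edgeFinset.1 (hA he.1)⟩, by simp [I, he]⟩
    obtain ⟨e, he, hmax⟩ := I.exists_max_image w hI
    refine ⟨A.erase e, fun _ => ⟨e, by simpa [I] using he, fun e' he' => hmax e' (by simpa [I] using he'), rfl⟩,
      fun h => absurd hne h⟩
  · exact ⟨A, fun h => absurd h hne, fun _ => rfl⟩

lemma RDReach.subset [Fintype V] {G : SimpleGraph V} {w : G.edgeSet → ℝ} {k : ℕ} :
    ∀ {A : Finset (Sym2 V)}, RDReach G w k A → A ⊆ G.edgeFinset := by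
  induction k with
  | zero => intro A h; exact (show A = _ from h).subset
  | succ k ih => rintro A ⟨B, hB, hs⟩; exact hs.subset.trans (ih hB)

lemma RDReach.card [Fintype V] {G : SimpleGraph V} {w : G.edgeSet → ℝ} {k : ℕ} :
    ∀ {A : Finset (Sym2 V)}, RDReach G w k A → G.edgeFinset.card ≤ A.card + k := by
  induction k with
  | zero => intro A h; rw [show A = _ from h]; omega
  | succ k ih => rintro A ⟨B, hB, hs⟩; have := ih hB; have := hs.card; omega

lemma isRDChain_iff [Fintype V] {G : SimpleGraph V} {w : G.edgeSet → ℝ}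
    {d : ℕ → Finset (Sym2 V)} :
    IsRDChain G w d ↔ d 0 = G.edgeFinset ∧ ∀ k, RDStep G w (d k) (d (k + 1)) := Iff.rfl

lemma RDReach.exists_chain [Fintype V] {G : SimpleGraph V} {w : G.edgeSet → ℝ} 
    {F : Finset (Sym2 V)} : ∀ {A : Finset (Sym2 V)} {k : ℕ}, RDReach G w k A →
    ∃ d, IsRDChain G w d ∧ d k = A := by
  have hnx : ∀ A : Finset (Sym2 V), ∃ B, A ⊆ G.edgeFinset → RDStep G w A B := by
    intro A
    by_cases hA : A ⊆ G.edgeFinset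
    · obtain ⟨B, hB⟩ := RDStep.exists w hA
      exact ⟨B, fun _ => hB⟩
    · exact ⟨A, fun h => absurd h hA⟩
  choose nx hnx using hnx
  have hit : ∀ (A : Finset (Sym2 V)), A ⊆ G.edgeFinset → ∀ n, nx^[n] A ⊆ G.edgeFinset := by
    intro A hA n
    induction n with
    | zero => exact hA
    | succ n ih => rw [Function.iterate_succ_apply']; exact (hnx _ ih).subset.trans ih
  intro A k
  induction k generalizing A with
  | zero =>
    intro h
    have h' : A = _ := h
    refine ⟨fun n => nx^[n] A, isRDChain_iff.2 ⟨h', fun n => ?_⟩, rfl⟩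
    simp only [Function.iterate_succ_apply']
    exact hnx _ (hit A h'.subset n)
  | succ k ih =>
    intro h
    have hA := h.subset
    obtain ⟨B, hB, hs⟩ := h
    obtain ⟨d, hd, rfl⟩ := ih hB
    rw [isRDChain_iff] at hd
    refine ⟨fun n => if n ≤ k then d n else nx^[n - (k + 1)] A,
      isRDChain_iff.2 ⟨by simpa using hd.1, fun n => ?_⟩, by simp⟩
    rcases lt_trichotomy n k with hn | rfl | hn
    · have h1 : n ≤ k := hn.le
      have h2 : n + 1 ≤ k := hn
      simp only [h1, h2, if_true]
      exact hd.2 n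
    · simpa using hs
    · have h1 : ¬ n ≤ k := by omega
      have h2 : ¬ n + 1 ≤ k := by omega
      have h3 : n + 1 - (k + 1) = (n - (k + 1)) + 1 := by omega
      simp only [h1, h2, if_false, h3, Function.iterate_succ_apply']
      exact hnx _ (hit A hA _)

lemma exists_chain_iff [Fintype V] {G : SimpleGraph V} {w : G.edgeSet → ℝ}
    {A : Finset (Sym2 V)} {k : ℕ} :
    (∃ d, IsRDChain G w d ∧ d k = A) ↔ RDReach G w k A := by
  refine ⟨?_, fun h => RDReach.exists_chain (F := A) h⟩
  rintro ⟨d, hd, rfl⟩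
  rw [isRDChain_iff] at hd
  induction k with
  | zero => exact hd.1
  | succ k ih => exact ⟨d k, ih, hd.2 k⟩

lemma RDReach.unique [Fintype V] {G : SimpleGraph V} {w : G.edgeSet → ℝ}
    (hw : Function.Injective w) {k : ℕ} : ∀ {A B : Finset (Sym2 V)},
    RDReach G w k A → RDReach G w k B → A = B := by
  induction k with
  | zero => intro A B hA hB; exact (show A = _ from hA).trans (show B = _ from hB).symm
  | succ k ih =>
    rintro A B ⟨A', hA', hA⟩ ⟨B', hB', hB⟩
    obtain rfl := ih hA' hB'
    by_cases hne : (edgeInterior A').Nonempty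
    · obtain ⟨e, he, hm, rfl⟩ := hA.1 hne
      obtain ⟨f, hf, hm', rfl⟩ := hB.1 hne
      rw [hw (le_antisymm (hm' e he) (hm f hf))]
    · rw [hA.2 hne, hB.2 hne]

lemma edgeInterior_mono {A B : Finset (Sym2 V)} (h : A ⊆ B) : edgeInterior A ⊆ edgeInterior B := by
  rintro e ⟨he, hb⟩
  refine ⟨h he, fun hb' => hb (hb'.anti ?_)⟩
  exact SimpleGraph.fromEdgeSet_mono (by exact_mod_cast h)

lemma RDReach.swap [Fintype V] {G : SimpleGraph V} {w : G.edgeSet → ℝ} {F : Finset (Sym2 V)}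
    {e f : G.edgeSet} (he : (e : Sym2 V) ∈ edgeInterior F) (hf : (f : Sym2 V) ∈ edgeInterior F)
    {k : ℕ} : ∀ {A : Finset (Sym2 V)}, F ⊆ A → RDReach G w k A →
      RDReach G (w ∘ Equiv.swap e f) k A := by
  induction k with
  | zero => intro A _ h; exact h
  | succ k ih =>
    rintro A hFA ⟨B, hB, hs⟩
    have hFB := hFA.trans hs.subset
    refine ⟨B, ih hFB hB, fun hne => ?_, hs.2⟩
    obtain ⟨g, hg, hm, rfl⟩ := hs.1 hne
    have hgF : (g : Sym2 V) ∉ F := fun h => by simpa using hFA h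
    have hge : g ≠ e := fun h => hgF (h ▸ he.1)
    have hgf : g ≠ f := fun h => hgF (h ▸ hf.1)
    refine ⟨g, hg, fun e' he' => ?_, rfl⟩
    simp only [Function.comp_apply, Equiv.swap_apply_of_ne_of_ne hge hgf]
    apply hm
    by_cases h1 : e' = e
    · rw [h1, Equiv.swap_apply_left]; exact edgeInterior_mono hFB hf
    by_cases h2 : e' = f
    · rw [h2, Equiv.swap_apply_right]; exact edgeInterior_mono hFB he
    rwa [Equiv.swap_apply_of_ne_of_ne h1 h2]

/-- `e` has maximal weight in the interior of `F`. -/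
def maxSet (G : SimpleGraph V) (F : Finset (Sym2 V)) (e : G.edgeSet) : Set (G.edgeSet → ℝ) :=
  {w | ∀ e' : G.edgeSet, (e' : Sym2 V) ∈ edgeInterior F → w e' ≤ w e}

/-- The event that `A` is reached after `k` steps. -/
def reachSet (G : SimpleGraph V) [Fintype V] (k : ℕ) (A : Finset (Sym2 V)) :
    Set (G.edgeSet → ℝ) := {w | RDReach G w k A}

lemma measurableSet_maxSet [Fintype V] (G : SimpleGraph V) (F : Finset (Sym2 V)) (e : G.edgeSet) :
    MeasurableSet (maxSet G F e) := by
  have : maxSet G F e = ⋂ e' : G.edgeSet, ⋂ _ : (e' : Sym2 V) ∈ edgeInterior F,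
      {w | w e' ≤ w e} := by
    ext w; simp [maxSet]
  rw [this]
  exact MeasurableSet.iInter fun e' => MeasurableSet.iInter fun _ =>
    measurableSet_le (measurable_pi_apply _) (measurable_pi_apply _)

lemma measurableSet_step [Fintype V] (G : SimpleGraph V) (A B : Finset (Sym2 V)) :
    MeasurableSet {w | RDStep G w A B} := by
  have : {w | RDStep G w A B} =
      {w | (edgeInterior A).Nonempty → w ∈ ⋃ e : G.edgeSet, ({_w | (e : Sym2 V) ∈ edgeInterior A} ∩
        (maxSet G A e ∩ {_w | B = A.erase (e : Sym2 V)}))} ∩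
      {_w | ¬(edgeInterior A).Nonempty → B = A} := by
    ext w; simp [RDStep, maxSet]
  rw [this]
  refine MeasurableSet.inter (MeasurableSet.imp (MeasurableSet.const _) ?_) (MeasurableSet.const _)
  exact MeasurableSet.iUnion fun e => (MeasurableSet.const _).inter
    ((measurableSet_maxSet G A e).inter (MeasurableSet.const _))

lemma measurableSet_reachSet [Fintype V] (G : SimpleGraph V) (k : ℕ) :
    ∀ A : Finset (Sym2 V), MeasurableSet (reachSet G k A) := by
  induction k with
  | zero => intro A; exact MeasurableSet.const _
  | succ k ih =>
    intro A
    have : reachSet G (k + 1) A = ⋃ B, (reachSet G k B ∩ {w | RDStep G w B A}) := by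
      ext w; simp [reachSet, RDReach]
    rw [this]
    exact MeasurableSet.iUnion fun B => (ih B).inter (measurableSet_step G B A)

lemma edgeUniform_tie {E : Type*} [Fintype E] {e f : E} (hef : e ≠ f) :
    edgeUniform E {w | w e = w f} = 0 := by
  have h0 : (volume : Measure (E → ℝ)) {w | w e = w f} = 0 := by
    let L : (E → ℝ) →ₗ[ℝ] ℝ := 
      LinearMap.proj (R := ℝ) (φ := fun _ : E => ℝ) e - LinearMap.proj (R := ℝ) (φ := fun _ : E => ℝ) f
    have hL : ({w | w e = w f} : Set (E → ℝ)) = (LinearMap.ker L : Set (E → ℝ)) := by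
      ext w; simp [L, sub_eq_zero]
    rw [hL]
    apply Measure.addHaar_submodule
    rw [Ne, LinearMap.ker_eq_top]
    intro h
    have : L (Pi.single e 1) = 0 := by rw [h]; rfl
    simp [L, hef.symm] at this
  unfold edgeUniform
  rw [← Measure.restrict_pi_pi]
  exact Measure.absolutelyContinuous_of_le Measure.restrict_le_self h0

lemma ae_injective {E : Type*} [Fintype E] : ∀ᵐ w ∂(edgeUniform E), Function.Injective w := by
  have : ∀ᵐ w ∂(edgeUniform E), ∀ e f : E, e ≠ f → w e ≠ w f := by
    rw [ae_all_iff]; intro e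
    rw [ae_all_iff]; intro f
    by_cases hef : e = f
    · simp [hef]
    · rw [ae_iff]
      simpa [hef] using edgeUniform_tie hef
  filter_upwards [this] with w hw e f h
  by_contra hne
  exact hw e f hne h

lemma aedisjoint_of {E : Type*} [Fintype E] {S T : Set (E → ℝ)}
    (h : ∀ w, Function.Injective w → w ∈ S → w ∈ T → False) : AEDisjoint (edgeUniform E) S T := by
  refine measure_mono_null ?_ (ae_iff.1 (ae_injective (E := E)))
  rintro w ⟨h1, h2⟩ hi
  exact h w hi h1 h2

instance {E : Type*} [Fintype E] : IsProbabilityMeasure (edgeUniform E) := by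
  haveI : IsProbabilityMeasure ((volume : Measure ℝ).restrict (Set.Icc (0 : ℝ) 1)) :=
    ⟨by simp⟩
  unfold edgeUniform
  infer_instance

lemma edgeUniform_perm {E : Type*} [Fintype E] (σ : Equiv.Perm E) {S : Set (E → ℝ)}
    (hS : MeasurableSet S) : edgeUniform E {w | w ∘ σ ∈ S} = edgeUniform E S := by
  have := measurePreserving_piCongrLeft (α := fun _ : E => ℝ)
    (fun _ : E => (volume : Measure ℝ).restrict (Set.Icc (0 : ℝ) 1)) σ.symm
  have h := this.measure_preimage hS.nullMeasurableSet
  unfold edgeUniform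
  rw [← h]
  congr 1
  ext w
  have : (MeasurableEquiv.piCongrLeft (fun _ : E => ℝ) σ.symm) w = w ∘ σ := by
    funext i
    have := Equiv.piCongrLeft_apply_apply (P := fun _ : E => ℝ) (e := σ.symm) w (σ i)
    simpa [MeasurableEquiv.coe_piCongrLeft] using this
  simp [this]

lemma measure_swap [Fintype V] (G : SimpleGraph V) {F : Finset (Sym2 V)} (k : ℕ)
    {e f : G.edgeSet} (he : (e : Sym2 V) ∈ edgeInterior F) (hf : (f : Sym2 V) ∈ edgeInterior F) :
    edgeUniform G.edgeSet (reachSet G k F ∩ maxSet G F f) ≤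
      edgeUniform G.edgeSet (reachSet G k F ∩ maxSet G F e) := by
  rw [← edgeUniform_perm (Equiv.swap e f)
    ((measurableSet_reachSet G k F).inter (measurableSet_maxSet G F e))]
  refine measure_mono ?_
  rintro w ⟨h1, h2⟩
  refine ⟨RDReach.swap he hf subset_rfl h1, fun e' he' => ?_⟩
  simp only [Function.comp_apply, Equiv.swap_apply_left]
  apply h2
  by_cases h1 : e' = e
  · rwa [h1, Equiv.swap_apply_left]
  by_cases h2 : e' = f
  · rwa [h2, Equiv.swap_apply_right]
  rwa [Equiv.swap_apply_of_ne_of_ne h1 h2]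

lemma measure_reach [Fintype V] (G : SimpleGraph V) {F : Finset (Sym2 V)}
    (hF : F ⊆ G.edgeFinset) (k : ℕ) {e : G.edgeSet} (he : (e : Sym2 V) ∈ edgeInterior F) :
    edgeUniform G.edgeSet (reachSet G k F) = ((edgeInterior F).ncard : ENNReal) *
      edgeUniform G.edgeSet (reachSet G k F ∩ maxSet G F e) := by
  let I : Finset G.edgeSet := Finset.univ.filter fun e => (e : Sym2 V) ∈ edgeInterior F
  have hIcard : (edgeInterior F).ncard = I.card := by
    have : edgeInterior F = ((I.map (Function.Embedding.subtype _) : Finset (Sym2 V)) : Set _) := by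
      ext x
      simp only [I, Finset.coe_map, Set.mem_image, Finset.mem_coe, Finset.mem_filter,
        Finset.mem_univ, true_and]
      constructor
      · intro hx
        exact ⟨⟨x, SimpleGraph.mem_edgeFinset.1 (hF hx.1)⟩, hx, rfl⟩
      · rintro ⟨y, hy, rfl⟩; exact hy
    rw [this, Set.ncard_coe_finset, Finset.card_map]
  have hU : reachSet G k F = ⋃ f ∈ I, (reachSet G k F ∩ maxSet G F f) := by
    ext w
    simp only [Set.mem_iUnion, Set.mem_inter_iff, exists_prop]
    constructor
    · intro hw
      obtain ⟨f, hf, hm⟩ := I.exists_max_image w ⟨e, by simpa [I] using he⟩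
      exact ⟨f, hf, hw, fun e' he' => hm e' (by simpa [I] using he')⟩
    · rintro ⟨f, -, h, -⟩; exact h
  have hsum : edgeUniform G.edgeSet (⋃ f ∈ I, (reachSet G k F ∩ maxSet G F f)) =
      ∑ f ∈ I, edgeUniform G.edgeSet (reachSet G k F ∩ maxSet G F f) := by
    apply measure_biUnion_finset₀
    · intro f hf g hg hfg
      refine aedisjoint_of fun w hw h1 h2 => hfg (hw ?_)
      simp only [I, Finset.coe_filter, Finset.mem_univ, true_and, Set.mem_setOf_eq] at hf hg
      exact le_antisymm (h2.2 f hf) (h1.2 g hg)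
    · intro f _
      exact ((measurableSet_reachSet G k F).inter (measurableSet_maxSet G F f)).nullMeasurableSet
  rw [← hU] at hsum
  rw [hsum, hIcard, ← nsmul_eq_mul]
  refine Finset.sum_eq_card_nsmul fun f hf => ?_
  have hf' : (f : Sym2 V) ∈ edgeInterior F := by simpa [I] using hf
  exact le_antisymm (measure_swap G k he hf') (measure_swap G k hf' he)

lemma rdProb_eq [Fintype V] (G : SimpleGraph V) (H : Finset (Sym2 V)) :
    rdProb G H =
      (edgeUniform G.edgeSet (reachSet G (G.edgeFinset.card - H.card) H)).toReal := by
  unfold rdProb reachSet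
  simp only [exists_chain_iff]

lemma mem_interior_insert [Fintype V] {G : SimpleGraph V} {H : Finset (Sym2 V)}
    (hHconn : (spanGraph H).Connected) {e : Sym2 V} (heH : e ∉ H) :
    e ∈ edgeInterior (insert e H) := by
  refine ⟨Finset.mem_insert_self _ _, ?_⟩
  induction e with | h u v =>
  rw [SimpleGraph.isBridge_iff, not_not]
  refine (hHconn.preconnected u v).mono ?_
  intro a b hab
  simp only [spanGraph, SimpleGraph.fromEdgeSet_adj, SimpleGraph.deleteEdges_adj,
    Finset.coe_insert, Set.mem_insert_iff, Finset.mem_coe, Set.mem_singleton_iff] at hab ⊢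
  exact ⟨⟨Or.inr hab.1, hab.2⟩, fun h => heH (h ▸ hab.1)⟩

/-- Reverse-delete induction: for a connected proper spanning subgraph `H` of a finite
connected graph `G`, `P_RD(H) = ∑_{e ∈ E(G)∖E(H)} P_RD(H ∪ e) / |(H ∪ e)°|`. -/
theorem reverse_delete_induction [Fintype V] (G : SimpleGraph V) (hG : G.Connected)
    (H : Finset (Sym2 V)) (hHsub : ↑H ⊆ G.edgeSet) (hHconn : (spanGraph H).Connected)
    (hne : H ≠ G.edgeFinset) :
    rdProb G H = ∑ e ∈ G.edgeFinset \ H,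
      rdProb G (insert e H) / ((edgeInterior (insert e H)).ncard : ℝ) := by
  have hHE : H ⊆ G.edgeFinset := fun x hx => SimpleGraph.mem_edgeFinset.2 (hHsub hx)
  have hlt : H.card < G.edgeFinset.card := Finset.card_lt_card (hHE.ssubset_of_ne hne)
  obtain ⟨k, hk⟩ : ∃ k, G.edgeFinset.card - H.card = k + 1 :=
    ⟨G.edgeFinset.card - H.card - 1, by omega⟩
  let J : Finset G.edgeSet := Finset.univ.filter fun e => (e : Sym2 V) ∉ H
  have hJ : G.edgeFinset \ H = J.map (Function.Embedding.subtype _) := by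
    ext x
    simp only [J, Finset.mem_sdiff, SimpleGraph.mem_edgeFinset, Finset.mem_map, Finset.mem_filter,
      Finset.mem_univ, true_and]
    constructor
    · rintro ⟨h1, h2⟩; exact ⟨⟨x, h1⟩, h2, rfl⟩
    · rintro ⟨y, hy, rfl⟩; exact ⟨y.2, hy⟩
  have hU : reachSet G (k + 1) H =
      ⋃ e ∈ J, (reachSet G k (insert (e : Sym2 V) H) ∩ maxSet G (insert (e : Sym2 V) H) e) := by
    ext w
    simp only [Set.mem_iUnion, Set.mem_inter_iff, exists_prop]
    constructor
    · rintro ⟨B, hB, hs⟩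
      have hc := hB.card
      rcases hs.cases with rfl | ⟨e, he, hm, rfl⟩
      · omega
      · refine ⟨e, by simp [J], ?_⟩
        rw [Finset.insert_erase he.1]
        exact ⟨hB, hm⟩
    · rintro ⟨e, he, hr, hm⟩
      have heH : (e : Sym2 V) ∉ H := by simpa [J] using he
      have hint := mem_interior_insert (G := G) hHconn heH
      exact ⟨_, hr, fun _ => ⟨e, hint, hm, (Finset.erase_insert heH).symm⟩,
        fun h => absurd ⟨_, hint⟩ h⟩
  have hsum : edgeUniform G.edgeSet (reachSet G (k + 1) H) = ∑ e ∈ J, edgeUniform G.edgeSet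
      (reachSet G k (insert (e : Sym2 V) H) ∩ maxSet G (insert (e : Sym2 V) H) e) := by
    rw [hU]
    apply measure_biUnion_finset₀
    · intro e he f hf hef
      refine aedisjoint_of fun w hw h1 h2 => hef (Subtype.ext ?_)
      have heH : (e : Sym2 V) ∉ H := by simpa [J] using he
      have heq : insert (e : Sym2 V) H = insert (f : Sym2 V) H := RDReach.unique hw h1.1 h2.1
      have : (e : Sym2 V) ∈ insert (f : Sym2 V) H := heq ▸ Finset.mem_insert_self _ _
      exact (Finset.mem_insert.1 this).resolve_right heH
    · intro f _
      exact ((measurableSet_reachSet G _ _).inter (measurableSet_maxSet G _ f)).nullMeasurableSet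
  rw [rdProb_eq, hk, hsum, hJ, Finset.sum_map, ENNReal.toReal_sum (fun _ _ => measure_ne_top _ _)]
  refine Finset.sum_congr rfl fun e he => ?_
  have heH : (e : Sym2 V) ∉ H := by simpa [J] using he
  have hint := mem_interior_insert (G := G) hHconn heH
  have hsub : insert (e : Sym2 V) H ⊆ G.edgeFinset :=
    Finset.insert_subset (SimpleGraph.mem_edgeFinset.2 e.2) hHE
  have hcard : G.edgeFinset.card - (insert (e : Sym2 V) H).card = k := by
    rw [Finset.card_insert_of_notMem heH]; omega
  have hpos : ((edgeInterior (insert (e : Sym2 V) H)).ncard : ℝ) ≠ 0 := by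
    have hfin : (edgeInterior (insert (e : Sym2 V) H)).Finite :=
      (insert (e : Sym2 V) H).finite_toSet.subset fun x hx => hx.1
    exact_mod_cast (Set.ncard_pos hfin).2 ⟨_, hint⟩ |>.ne'
  simp only [Function.Embedding.subtype_apply]
  rw [rdProb_eq, hcard, measure_reach G hsub k hint, ENNReal.toReal_mul, ENNReal.toReal_natCast,
    mul_div_cancel_left₀ _ hpos]

end RST
end
end

section
/- Let G be a finite connected simple graph with n vertices, let T be a spanning tree of G, and let π = (e_1, …, e_{n−1}) be an ordering (bijection) of the edges of T. For 0 ≤ j ≤ n−2 let F_j be the spanning forest of G with edge set {e_1, …, e_j}, and let ∂F_j be the set of edges of G joining two distinct connected components of F_j. Let P_MST(T, π) be the μ_G-probability that T is the unique minimum-weight spanning tree and simultaneously w(e_1) < w(e_2) < ⋯ < w(e_{n−1}). Then P_MST(T, π) = ∏_{j=0}^{n−2} 1/|∂F_j|; consequently P_MST(T;G) = ∑_π ∏_{j=0}^{n−2} 1/|∂F_j(π)|, where the sum is over all orderings π of E(T). -/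
open MeasureTheory SimpleGraph
open scoped Classical

noncomputable section

namespace RST

variable {V : Type*}

/-- `T` is (the edge set of) a spanning tree of `G`. -/
def IsSpanningTree (G : SimpleGraph V) (T : Finset (Sym2 V)) : Prop :=
  ↑T ⊆ G.edgeSet ∧ (spanGraph T).Connected ∧ (spanGraph T).IsAcyclic

/-- Total weight `∑_{e ∈ T} w e` of the tree `T`. -/
def treeWeight (G : SimpleGraph V) [Fintype V] (w : G.edgeSet → ℝ) (T : Finset (Sym2 V)) : ℝ :=
  ∑ e : G.edgeSet, if (e : Sym2 V) ∈ T then w e else 0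

/-- The event that `T` is the unique minimum-weight spanning tree of `G`. -/
def mstEvent (G : SimpleGraph V) [Fintype V] (T : Finset (Sym2 V)) : Set (G.edgeSet → ℝ) :=
  {w | IsSpanningTree G T ∧ ∀ T' : Finset (Sym2 V), IsSpanningTree G T' → T' ≠ T →
    treeWeight G w T < treeWeight G w T'}

/-- `P_MST(T; G)`: probability that `T` is the unique minimum-weight spanning tree. -/
def mstProb (G : SimpleGraph V) [Fintype V] (T : Finset (Sym2 V)) : ℝ :=
  (edgeUniform G.edgeSet (mstEvent G T)).toReal

/-- `∂F`: the set of edges of `G` joining two distinct connected components of the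
spanning forest with edge set `F`. -/
def boundary (G : SimpleGraph V) (F : Finset (Sym2 V)) : Set (Sym2 V) :=
  {e | e ∈ G.edgeSet ∧ e ∉ F ∧ ∀ u v : V, e = s(u, v) → ¬(spanGraph F).Reachable u v}

/-- The event that the weights of the edges `π 0, π 1, …` occur in increasing order. -/
def orderEvent (G : SimpleGraph V) [Fintype V] {k : ℕ} (π : Fin k → Sym2 V) :
    Set (G.edgeSet → ℝ) :=
  {w | ∀ (i j : Fin k) (e e' : G.edgeSet), i < j → (e : Sym2 V) = π i →
    (e' : Sym2 V) = π j → w e < w e'}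

/-- `F_j(π)`: the forest consisting of the first `j` tree edges in the order `π`. -/
def initialForest {V : Type*} (T : Finset (Sym2 V)) (π : Fin T.card ≃ ↥T) (j : ℕ) :
    Finset (Sym2 V) :=
  (Finset.univ.filter fun i : Fin T.card => (i : ℕ) < j).image fun i => (π i).1

def unif : Measure ℝ := (volume : Measure ℝ).restrict (Set.Icc (0 : ℝ) 1)

instance unif_prob : IsProbabilityMeasure unif := ⟨by simp [unif]⟩

lemma unif_Ioi (t : ℝ) : unif (Set.Ioi t) = ENNReal.ofReal (1 - max t 0) := by
  have : (volume : Measure ℝ).restrict (Set.Icc (0 : ℝ) 1) =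
      (volume : Measure ℝ).restrict (Set.Ioc (0 : ℝ) 1) :=
    Measure.restrict_congr_set Ioc_ae_eq_Icc.symm
  rw [unif, this, Measure.restrict_apply measurableSet_Ioi]
  have h : Set.Ioi t ∩ Set.Ioc 0 1 = Set.Ioc (max t 0) 1 := by
    ext x; simp; tauto
  rw [h, Real.volume_Ioc]

lemma unif_int (t : ℝ) (k : ℕ) :
    ∫⁻ s in Set.Ioi t, (unif (Set.Ioi s)) ^ k ∂unif
      = (unif (Set.Ioi t)) ^ (k + 1) * ((k + 1 : ℕ) : ENNReal)⁻¹ := by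
  have : (volume : Measure ℝ).restrict (Set.Icc (0 : ℝ) 1) =
      (volume : Measure ℝ).restrict (Set.Ioc (0 : ℝ) 1) :=
    Measure.restrict_congr_set Ioc_ae_eq_Icc.symm
  have h : Set.Ioi t ∩ Set.Ioc 0 1 = Set.Ioc (max t 0) 1 := by
    ext x; simp; tauto
  have h1 : unif.restrict (Set.Ioi t) = volume.restrict (Set.Ioc (max t 0) 1) := by
    rw [unif, this, Measure.restrict_restrict measurableSet_Ioi, h]
  rw [h1, unif_Ioi]
  set a := max t 0 with ha
  have ha0 : 0 ≤ a := le_max_right _ _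
  rcases le_or_gt a 1 with h' | h'
  · have e1 : ∫⁻ s in Set.Ioc a 1, (unif (Set.Ioi s)) ^ k
        = ∫⁻ s in Set.Ioc a 1, ENNReal.ofReal ((1 - s) ^ k) := by
      refine setLIntegral_congr_fun measurableSet_Ioc fun s hs => ?_
      simp only [unif_Ioi]
      rw [max_eq_left (ha0.trans hs.1.le), ENNReal.ofReal_pow (by linarith [hs.2])]
    have e2 : ∫ s in Set.Ioc a 1, (1 - s) ^ k = (1 - a) ^ (k + 1) / (k + 1) := by
      rw [← intervalIntegral.integral_of_le h',
        intervalIntegral.integral_comp_sub_left (fun x => x ^ k) 1]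
      simp
    rw [e1, ← ofReal_integral_eq_lintegral_ofReal, e2, ENNReal.ofReal_div_of_pos (by positivity),
      ENNReal.ofReal_pow (by linarith), div_eq_mul_inv]
    · congr 2
      rw [show (k : ℝ) + 1 = ((k + 1 : ℕ) : ℝ) by push_cast; ring, ENNReal.ofReal_natCast]
    · exact (Continuous.integrableOn_Icc (by fun_prop)).mono_set Set.Ioc_subset_Icc_self
    · refine (ae_restrict_iff' measurableSet_Ioc).2 (Filter.Eventually.of_forall fun s hs => ?_)
      exact pow_nonneg (by linarith [hs.2]) _
  · rw [Set.Ioc_eq_empty (by linarith), ENNReal.ofReal_of_nonpos (by linarith)]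
    simp

instance edgeUniform_prob {E : Type*} [Fintype E] : IsProbabilityMeasure (edgeUniform E) := by
  have : IsProbabilityMeasure (Measure.pi fun _ : E => unif) := inferInstance
  exact this

lemma measurable_upd {E : Type*} (e0 : E) :
    Measurable (fun p : ℝ × (E → ℝ) => Function.update p.2 e0 p.1) := by
  refine measurable_pi_iff.2 fun f => ?_
  by_cases h : f = e0
  · subst h; simpa using measurable_fst
  · simp only [Function.update_of_ne h]
    exact (measurable_pi_apply f).comp measurable_snd

lemma map_update {E : Type*} [Fintype E] (e0 : E) :
    (unif.prod (edgeUniform E)).map (fun p : ℝ × (E → ℝ) => Function.update p.2 e0 p.1)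
      = edgeUniform E := by
  symm
  refine Measure.pi_eq (μ := fun _ : E => unif) (fun s hs => ?_)
  rw [Measure.map_apply (measurable_upd e0) (MeasurableSet.univ_pi hs)]
  have : (fun p : ℝ × (E → ℝ) => Function.update p.2 e0 p.1) ⁻¹' (Set.univ.pi s)
      = s e0 ×ˢ (Set.univ.pi fun f => if f = e0 then Set.univ else s f) := by
    ext p
    simp only [Set.mem_preimage, Set.mem_pi, Set.mem_univ, true_imp_iff, Set.mem_prod]
    constructor
    · intro h
      refine ⟨by simpa using h e0, fun f => ?_⟩
      by_cases hf : f = e0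
      · simp [hf]
      · simpa [hf] using h f
    · rintro ⟨h1, h2⟩ f
      by_cases hf : f = e0
      · subst hf; simpa using h1
      · simpa [hf] using h2 f
  rw [this, Measure.prod_prod]
  have h2 : edgeUniform E (Set.univ.pi fun f => if f = e0 then Set.univ else s f)
     = ∏ f, unif (if f = e0 then Set.univ else s f) := Measure.pi_pi _ _
  rw [h2, ← Finset.mul_prod_erase _ _ (Finset.mem_univ e0),
    ← Finset.mul_prod_erase _ (fun i => unif (s i)) (Finset.mem_univ e0)]
  simp only [if_true, measure_univ, one_mul]
  congr 1
  refine Finset.prod_congr rfl fun f hf => ?_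
  rw [if_neg (Finset.ne_of_mem_erase hf)]

lemma edgeUniform_fubini {E : Type*} [Fintype E] (e0 : E) {A : Set (E → ℝ)}
    (hA : MeasurableSet A) :
    edgeUniform E A = ∫⁻ s, edgeUniform E {w | Function.update w e0 s ∈ A} ∂unif := by
  conv_lhs => rw [← map_update e0]
  rw [Measure.map_apply (measurable_upd e0) hA, Measure.prod_apply (measurable_upd e0 hA)]
  rfl

lemma tie_null {E : Type*} [Fintype E] {a b : E} (hab : a ≠ b) :
    edgeUniform E {w | w a = w b} = 0 := by
  have : Measurable fun w : E → ℝ => w a := measurable_pi_apply a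
  have hb : Measurable fun w : E → ℝ => w b := measurable_pi_apply b
  have hm := measurableSet_eq_fun this hb
  have h0 : edgeUniform E {w | w a = w b} = 
     (unif.prod (edgeUniform E)) ((fun p : ℝ × (E → ℝ) => Function.update p.2 a p.1) ⁻¹' {w | w a = w b}) := by
    conv_lhs => rw [← map_update a]
    rw [Measure.map_apply (measurable_upd a) hm]
  rw [h0, Measure.prod_apply_symm (measurable_upd a hm)]
  have : ∀ w : E → ℝ, unif ((fun s : ℝ => Function.update w a s) ⁻¹' {w | w a = w b}) = 0 := by
    intro w
    have : ((fun s : ℝ => Function.update w a s) ⁻¹' {w | w a = w b}) = {w b} := by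
      ext s; simp [Function.update_of_ne hab.symm]
    rw [this]; simp [unif]
  calc _ = ∫⁻ w : E → ℝ, 0 ∂(edgeUniform E) := lintegral_congr fun w => this w
    _ = 0 := lintegral_zero

structure Good (U : Set ℝ) : Prop where
  meas : MeasurableSet U
  upper : ∀ s ∈ U, ∀ x, s < x → x ∈ U
  int : ∀ k : ℕ, ∫⁻ s in U, (unif (Set.Ioi s)) ^ k ∂unif
      = (unif U) ^ (k + 1) * ((k + 1 : ℕ) : ENNReal)⁻¹

lemma good_Ioi (t : ℝ) : Good (Set.Ioi t) :=
  ⟨measurableSet_Ioi, fun _ hs _ hx => lt_trans hs hx, unif_int t⟩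

lemma good_univ : Good Set.univ := by
  refine ⟨MeasurableSet.univ, fun _ _ _ _ => trivial, fun k => ?_⟩
  have h1 : unif (Set.Ioi (-1)) = 1 := by rw [unif_Ioi]; simp
  have h2 : (Set.Ioi (-1 : ℝ)) =ᵐ[unif] Set.univ := by
    rw [ae_eq_univ, prob_compl_eq_zero_iff measurableSet_Ioi, h1]
  have := unif_int (-1) k
  rw [setLIntegral_congr h2, measure_congr h2] at this
  exact this

def chainEvent {E : Type*} {m : ℕ} (S : E → Set ℝ) (B : Fin m → Finset E) (e : Fin m → E) :
    Set (E → ℝ) :=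
  {w | (∀ f, w f ∈ S f) ∧ ∀ i, ∀ f ∈ B i, f ≠ e i → w (e i) < w f}

lemma chain_measurable {E : Type*} [Fintype E] {m : ℕ} (S : E → Set ℝ)
    (hS : ∀ f, MeasurableSet (S f)) (B : Fin m → Finset E)
    (e : Fin m → E) : MeasurableSet (chainEvent S B e) := by
  have : chainEvent S B e = (⋂ f, {w : E → ℝ | w f ∈ S f}) ∩
      ⋂ i, ⋂ f, ⋂ (_ : f ∈ B i), ⋂ (_ : f ≠ e i), {w : E → ℝ | w (e i) < w f} := by
    ext w; simp [chainEvent]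
  rw [this]
  refine MeasurableSet.inter (MeasurableSet.iInter fun f => ?_) (MeasurableSet.iInter fun i =>
    MeasurableSet.iInter fun f => MeasurableSet.iInter fun _ => MeasurableSet.iInter fun _ => ?_)
  · exact measurable_pi_apply f (hS f)
  · exact measurableSet_lt (measurable_pi_apply _) (measurable_pi_apply f)

lemma chain_prob {E : Type*} [Fintype E] : ∀ (m : ℕ) (B : Fin m → Finset E) (e : Fin m → E)
    (_ : ∀ i, e i ∈ B i) (_ : ∀ i j, i < j → B j ⊆ (B i).erase (e i)) (S : E → Set ℝ)
    (_ : ∀ f, MeasurableSet (S f)) (U : Set ℝ) (_ : Good U)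
    (_ : ∀ i, ∀ f ∈ B i, S f = U),
    edgeUniform E (chainEvent S B e)
      = (∏ f, unif (S f)) * ∏ i, ((B i).card : ENNReal)⁻¹ := by
  intro m
  induction m with
  | zero =>
    intro B e _ _ S _ U _ _
    have : chainEvent S B e = Set.univ.pi S := by
      ext w; simp [chainEvent]
    rw [this]
    simp only [Finset.univ_eq_empty, Finset.prod_empty, mul_one]
    exact Measure.pi_pi _ _
  | succ m ih =>
    intro B e he hB S hSm U hU hS
    set S' : ℝ → E → Set ℝ := fun s f =>
      if f = e 0 then Set.univ else if f ∈ B 0 then Set.Ioi s else S f with hS'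
    have hne : ∀ i : Fin m, ∀ f ∈ B i.succ, f ∈ B 0 ∧ f ≠ e 0 := fun i f hf => by
      have := hB 0 i.succ (Fin.succ_pos i) hf
      exact ⟨Finset.mem_of_mem_erase this, Finset.ne_of_mem_erase this⟩
    have hS'm : ∀ s f, MeasurableSet (S' s f) := by
      intro s f
      simp only [hS']
      split_ifs
      exacts [MeasurableSet.univ, measurableSet_Ioi, hSm f]
    have key : ∀ s, edgeUniform E {w | Function.update w (e 0) s ∈ chainEvent S B e}
        = U.indicator (fun s => edgeUniform E
          (chainEvent (S' s) (fun i => B i.succ) (fun i => e i.succ))) s := by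
      intro s
      by_cases hs : s ∈ U
      · rw [Set.indicator_of_mem hs]
        congr 1
        ext w
        simp only [chainEvent, Set.mem_ofPred_eq]
        constructor
        · rintro ⟨h1, h2⟩
          constructor
          · intro f
            simp only [hS']
            split_ifs with a b
            · trivial
            · have := h2 0 f b a
              simpa [Function.update_of_ne a] using this
            · simpa [Function.update_of_ne a] using h1 f
          · intro i f hf hfe
            have := h2 i.succ f hf hfe
            rwa [Function.update_of_ne (hne i f hf).2,
              Function.update_of_ne (hne i _ (he i.succ)).2] at this
        · rintro ⟨h1, h2⟩
          constructor
          · intro f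
            have h := h1 f
            simp only [hS'] at h
            split_ifs at h with a b
            · subst a; rw [hS 0 _ (he 0)]; simpa using hs
            · rw [Function.update_of_ne a, hS 0 f b]
              exact hU.upper s hs _ h
            · rwa [Function.update_of_ne a]
          · intro i f hf hfe
            induction i using Fin.cases with
            | zero =>
              have h := h1 f
              simp only [hS', if_neg hfe, if_pos hf] at h
              simpa [Function.update_of_ne hfe] using h
            | succ i =>
              have := h2 i f hf hfe
              rwa [Function.update_of_ne (hne i f hf).2,
                Function.update_of_ne (hne i _ (he i.succ)).2]
      · rw [Set.indicator_of_notMem hs]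
        convert measure_empty (μ := edgeUniform E)
        ext w
        simp only [Set.mem_ofPred_eq, Set.mem_empty_iff_false, iff_false]
        intro h
        have := h.1 (e 0)
        rw [hS 0 _ (he 0)] at this
        simp at this
        exact hs this
    set C := ∏ i : Fin m, ((B i.succ).card : ENNReal)⁻¹ with hC
    have hprod : ∀ s, ∏ f, unif (S' s f)
        = unif (Set.Ioi s) ^ ((B 0).card - 1) * ∏ f ∈ (B 0)ᶜ, unif (S f) := by
      intro s
      rw [← Finset.prod_mul_prod_compl (B 0), ← Finset.mul_prod_erase _ _ (he 0)]
      congr 1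
      · simp only [hS', if_true, measure_univ, one_mul]
        rw [← Finset.card_erase_of_mem (he 0)]
        refine Finset.prod_eq_pow_card fun f hf => ?_
        rw [if_neg (Finset.ne_of_mem_erase hf), if_pos (Finset.mem_of_mem_erase hf)]
      · refine Finset.prod_congr rfl fun f hf => ?_
        have hf' := Finset.mem_compl.1 hf
        simp only [hS']
        rw [if_neg (fun h : f = e 0 => hf' (h ▸ he 0)), if_neg hf']
    have hIH : ∀ s, edgeUniform E (chainEvent (S' s) (fun i => B i.succ) (fun i => e i.succ))
        = unif (Set.Ioi s) ^ ((B 0).card - 1) * ((∏ f ∈ (B 0)ᶜ, unif (S f)) * C) := by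
      intro s
      rw [ih (fun i => B i.succ) (fun i => e i.succ) (fun i => he i.succ)
        (fun i j hij => hB i.succ j.succ (Fin.succ_lt_succ_iff.2 hij)) (S' s) (hS'm s)
        (Set.Ioi s) (good_Ioi s) (fun i f hf => ?_), hprod, mul_assoc]
      simp only [hS']
      rw [if_neg (hne i f hf).2, if_pos (hne i f hf).1]
    have hcard : (B 0).card - 1 + 1 = (B 0).card :=
      Nat.sub_add_cancel (Finset.card_pos.2 ⟨_, he 0⟩)
    have hmeas : Measurable fun s : ℝ => unif (Set.Ioi s) ^ ((B 0).card - 1) := by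
      have : (fun s : ℝ => unif (Set.Ioi s)) = fun s => ENNReal.ofReal (1 - max s 0) :=
        funext unif_Ioi
      have h : Measurable fun s : ℝ => unif (Set.Ioi s) := by rw [this]; fun_prop
      exact h.pow_const _
    rw [edgeUniform_fubini (e 0) (chain_measurable S hSm B e), lintegral_congr key,
      lintegral_indicator hU.meas]
    simp only [hIH]
    rw [lintegral_mul_const _ hmeas, hU.int, hcard, Fin.prod_univ_succ,
      ← Finset.prod_mul_prod_compl (B 0) (fun f => unif (S f)),
      Finset.prod_congr (s₁ := B 0) (g := fun _ => unif U) rfl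
        (fun f hf => by rw [hS 0 f hf]), Finset.prod_const]
    ring
lemma mem_edgeSet_spanGraph {G : SimpleGraph V} {T : Finset (Sym2 V)} (h : ↑T ⊆ G.edgeSet) :
    (spanGraph T).edgeSet = ↑T := by
  rw [spanGraph, edgeSet_fromEdgeSet]
  ext e
  simp only [Set.mem_sdiff]
  constructor
  · exact fun h => h.1
  · exact fun he => ⟨he, fun hd => G.not_isDiag_of_mem_edgeSet (h he) hd⟩

lemma spanGraph_mono {F T : Finset (Sym2 V)} (h : F ⊆ T) : spanGraph F ≤ spanGraph T :=
  fromEdgeSet_mono (by exact_mod_cast h)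

lemma walk_exists_cross {H K : SimpleGraph V} {u v : V} (p : H.Walk u v)
    (h : ¬ K.Reachable u v) : ∃ a b, s(a, b) ∈ p.edges ∧ ¬ K.Reachable a b := by
  induction p with
  | nil => exact absurd (Reachable.refl _) h
  | @cons u v w huv p ih =>
    by_cases h1 : K.Reachable u v
    · obtain ⟨a, b, hab, hn⟩ := ih (fun h2 => h (h1.trans h2))
      exact ⟨a, b, by simp [hab], hn⟩
    · exact ⟨u, v, by simp, h1⟩

lemma exchange [Fintype V] {G : SimpleGraph V} {T F : Finset (Sym2 V)}
    (hT : IsSpanningTree G T) {f : Sym2 V} (hf : f ∈ boundary G F) (hfT : f ∉ T) :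
    ∃ g ∈ T, g ∈ boundary G F ∧ IsSpanningTree G (insert f (T.erase g)) := by
  obtain ⟨hTG, hTc, hTa⟩ := hT
  obtain ⟨hfG, hfF, hfr⟩ := hf
  induction f with | _ u v
  have hnr := hfr u v rfl
  have huv : u ≠ v := fun h => hnr (h ▸ Reachable.refl _)
  obtain ⟨p, hp⟩ := hTc.exists_isPath v u
  obtain ⟨a, b, hab, hnab⟩ := walk_exists_cross p (fun h => hnr h.symm)
  have hTe := mem_edgeSet_spanGraph hTG
  have hgT : s(a, b) ∈ T := by
    have := p.edges_subset_edgeSet hab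
    rw [hTe] at this
    exact_mod_cast this
  have hne : a ≠ b := fun h => hnab (h ▸ Reachable.refl _)
  have hgf : s(a, b) ≠ s(u, v) := fun h => hfT (h ▸ hgT)
  refine ⟨s(a, b), hgT, ⟨hTG hgT, ?_, ?_⟩, ?_⟩
  · intro hF
    refine hnab (Adj.reachable ?_)
    rw [spanGraph, fromEdgeSet_adj]
    exact ⟨hF, hne⟩
  · intro x y hxy hr
    rcases Sym2.eq_iff.1 hxy with ⟨rfl, rfl⟩ | ⟨rfl, rfl⟩
    · exact hnab hr
    · exact hnab hr.symm
  · have hsub : (↑(insert s(u, v) (T.erase s(a, b))) : Set (Sym2 V)) ⊆ G.edgeSet := by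
      intro e he
      rcases Finset.mem_insert.1 (by exact_mod_cast he) with rfl | h
      · exact hfG
      · exact hTG (Finset.mem_of_mem_erase h)
    have hle : spanGraph T ≤ spanGraph (insert s(u, v) T) :=
      spanGraph_mono (Finset.subset_insert _ _)
    have hadj : (spanGraph (insert s(u, v) T)).Adj u v := by
      rw [spanGraph, fromEdgeSet_adj]
      exact ⟨by simp, huv⟩
    have hcyc : (Walk.cons hadj (p.mapLe hle)).IsCycle := by
      rw [Walk.cons_isCycle_iff]
      refine ⟨hp.mapLe hle, fun h => hfT ?_⟩
      rw [Walk.edges_mapLe_eq_edges] at h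
      have := p.edges_subset_edgeSet h
      rw [hTe] at this
      exact_mod_cast this
    have hnb : ¬ (spanGraph (insert s(u, v) T)).IsBridge s(a, b) := by
      intro hb
      refine hb.notMem_edges_of_isCycle hcyc ?_
      rw [Walk.edges_cons, Walk.edges_mapLe_eq_edges]
      exact List.mem_cons_of_mem _ hab
    have hc := (hTc.mono hle).connected_delete_edge_of_not_isBridge hnb
    have heq : (spanGraph (insert s(u, v) T)).deleteEdges {s(a, b)}
        = spanGraph (insert s(u, v) (T.erase s(a, b))) := by
      ext x y
      simp only [deleteEdges_adj, spanGraph, fromEdgeSet_adj, Finset.mem_coe, Finset.mem_insert,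
        Finset.mem_erase, Set.mem_singleton_iff]
      constructor
      · rintro ⟨⟨h1 | h1, h2⟩, h3⟩
        · exact ⟨Or.inl h1, h2⟩
        · exact ⟨Or.inr ⟨h3, h1⟩, h2⟩
      · rintro ⟨h1 | h1, h2⟩
        · exact ⟨⟨Or.inl h1, h2⟩, fun h => hgf (h.symm.trans h1)⟩
        · exact ⟨⟨Or.inr h1.2, h2⟩, h1.1⟩
    rw [heq] at hc
    refine ⟨hsub, hc, ?_⟩
    have ht : (spanGraph T).IsTree := ⟨hTc, hTa⟩
    rw [isTree_iff_connected_and_card] at ht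
    refine ((isTree_iff_connected_and_card).2 ⟨hc, ?_⟩).isAcyclic
    rw [← ht.2, mem_edgeSet_spanGraph hsub, hTe]
    have h1 : T.card ≠ 0 := (Finset.card_pos.2 ⟨_, hgT⟩).ne'
    simp only [Nat.card_coe_set_eq, Set.ncard_coe_finset]
    rw [Finset.card_insert_of_notMem (fun h => hfT (Finset.mem_of_mem_erase h)),
      Finset.card_erase_of_mem hgT]
    omega

lemma treeWeight_exchange [Fintype V] {G : SimpleGraph V} {T : Finset (Sym2 V)}
    (w : G.edgeSet → ℝ) (f g : G.edgeSet) (hf : (f : Sym2 V) ∉ T) (hg : (g : Sym2 V) ∈ T) :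
    treeWeight G w (insert (f : Sym2 V) (T.erase (g : Sym2 V)))
      = treeWeight G w T + w f - w g := by
  have hfg : f ≠ g := fun h => hf (h ▸ hg)
  have h1 : w f = ∑ e : G.edgeSet, if e = f then w e else 0 := by simp
  have h2 : w g = ∑ e : G.edgeSet, if e = g then w e else 0 := by simp
  rw [h1, h2, treeWeight, treeWeight, ← Finset.sum_add_distrib, ← Finset.sum_sub_distrib]
  refine Finset.sum_congr rfl fun e _ => ?_
  simp only [Finset.mem_insert, Finset.mem_erase, ← Subtype.ext_iff, ne_eq]
  by_cases ef : e = f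
  · subst ef; simp [hf, hfg]
  · by_cases eg : e = g
    · subst eg; simp [hg, ef]
    · simp [ef, eg]

lemma mem_initialForest {T : Finset (Sym2 V)} {π : Fin T.card ≃ ↥T} {j : ℕ} {e : Sym2 V} :
    e ∈ initialForest T π j ↔ ∃ i : Fin T.card, (i : ℕ) < j ∧ (π i).1 = e := by
  simp [initialForest]

lemma boundary_anti (G : SimpleGraph V) {F F' : Finset (Sym2 V)} (h : F ⊆ F') :
    boundary G F' ⊆ boundary G F := fun _ he =>
  ⟨he.1, fun h' => he.2.1 (h h'), fun u v huv hr => he.2.2 u v huv (hr.mono (spanGraph_mono h))⟩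

lemma initialForest_mono {T : Finset (Sym2 V)} (π : Fin T.card ≃ ↥T) {i j : ℕ} (h : i ≤ j) :
    initialForest T π i ⊆ initialForest T π j := by
  intro e he
  rw [mem_initialForest] at he ⊢
  obtain ⟨k, hk, rfl⟩ := he
  exact ⟨k, hk.trans_le h, rfl⟩

lemma mem_boundary_self {G : SimpleGraph V} {T : Finset (Sym2 V)}
    (hT : IsSpanningTree G T) (π : Fin T.card ≃ ↥T) (j : Fin T.card) :
    (π j).1 ∈ boundary G (initialForest T π j) := by
  obtain ⟨hTG, hTc, hTa⟩ := hT
  have hn : (π j).1 ∉ initialForest T π j := by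
    rw [mem_initialForest]
    rintro ⟨i, hi, h⟩
    have := π.injective (Subtype.ext h)
    subst this
    exact lt_irrefl _ hi
  refine ⟨hTG (π j).2, hn, fun u v huv hr => ?_⟩
  have hm : s(u, v) ∈ (spanGraph T).edgeSet := by
    rw [mem_edgeSet_spanGraph hTG, ← huv]; exact (π j).2
  have hb := isAcyclic_iff_forall_isBridge.1 hTa hm
  rw [isBridge_iff] at hb
  refine hb (hr.mono ?_)
  intro x y hxy
  rw [spanGraph, fromEdgeSet_adj] at hxy
  rw [deleteEdges_adj, spanGraph, fromEdgeSet_adj]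
  refine ⟨⟨?_, hxy.2⟩, fun h => hn ?_⟩
  · obtain ⟨i, -, h⟩ := mem_initialForest.1 (Finset.mem_coe.1 hxy.1)
    rw [← h]; exact (π i).2
  · rw [huv, ← Set.mem_singleton_iff.1 h]; exact_mod_cast hxy.1

/-- The boundary of the `j`-th initial forest as a finset of edges. -/
def bdFin [Fintype V] (G : SimpleGraph V) (T : Finset (Sym2 V)) (π : Fin T.card ≃ ↥T)
    (j : Fin T.card) : Finset G.edgeSet :=
  Finset.univ.filter fun e => (e : Sym2 V) ∈ boundary G (initialForest T π j)

lemma bdFin_card [Fintype V] (G : SimpleGraph V) (T : Finset (Sym2 V)) (π : Fin T.card ≃ ↥T)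
    (j : Fin T.card) : (bdFin G T π j).card = (boundary G (initialForest T π j)).ncard := by
  rw [← Set.ncard_coe_finset, ← Set.ncard_image_of_injective _ Subtype.val_injective]
  congr 1
  ext e
  simp only [bdFin, Finset.coe_filter, Finset.mem_univ, true_and, Set.mem_image]
  constructor
  · rintro ⟨x, hx, rfl⟩; exact hx
  · intro h; exact ⟨⟨e, h.1⟩, h, rfl⟩

/-- The `j`-th tree edge as an edge of `G`. -/
def edg {G : SimpleGraph V} {T : Finset (Sym2 V)} (hT : IsSpanningTree G T)
    (π : Fin T.card ≃ ↥T) (j : Fin T.card) : G.edgeSet := ⟨(π j).1, hT.1 (π j).2⟩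

lemma event_iff [Fintype V] {G : SimpleGraph V} {T : Finset (Sym2 V)}
    (hT : IsSpanningTree G T) (π : Fin T.card ≃ ↥T) (w : G.edgeSet → ℝ) :
    w ∈ mstEvent G T ∩ orderEvent G (fun i => (π i).1) ↔
      ∀ j, ∀ f ∈ bdFin G T π j, f ≠ edg hT π j → w (edg hT π j) < w f := by
  constructor
  · rintro ⟨⟨-, hm⟩, ho⟩ j f hf hfe
    have hf : (f : Sym2 V) ∈ boundary G (initialForest T π j) := by simpa [bdFin] using hf
    by_cases hfT : (f : Sym2 V) ∈ T
    · obtain ⟨i, hi⟩ := π.surjective ⟨f, hfT⟩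
      have hi' : (f : Sym2 V) = (π i).1 := by rw [hi]
      refine ho j i _ f ?_ rfl hi'
      refine lt_of_le_of_ne (not_lt.1 fun hij => hf.2.1 ?_) ?_
      · exact mem_initialForest.2 ⟨i, hij, hi'.symm⟩
      · rintro rfl
        exact hfe (Subtype.ext hi')
    · obtain ⟨g, hgT, hgb, hs⟩ := exchange hT hf hfT
      have hlt := hm _ hs (fun h => hfT (h ▸ Finset.mem_insert_self _ _))
      rw [treeWeight_exchange w f ⟨g, hT.1 hgT⟩ hfT hgT] at hlt
      obtain ⟨i, hi⟩ := π.surjective ⟨g, hgT⟩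
      have hi' : g = (π i).1 := by rw [hi]
      have hji : j ≤ i := not_lt.1 fun hij => hgb.2.1 (mem_initialForest.2 ⟨i, hij, hi'.symm⟩)
      have : w (edg hT π j) ≤ w ⟨g, hT.1 hgT⟩ := by
        rcases hji.eq_or_lt with rfl | hlt
        · exact le_of_eq (congrArg w (Subtype.ext hi'.symm))
        · exact (ho j i _ ⟨g, hT.1 hgT⟩ hlt rfl hi').le
      linarith
  · intro h
    refine ⟨⟨hT, ?_⟩, ?_⟩
    · have hstep : ∀ T', IsSpanningTree G T' → T' ≠ T →
          ∃ T'', IsSpanningTree G T'' ∧ treeWeight G w T'' < treeWeight G w T' := by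
        intro T' hT' hne
        have hex : ∃ j : ℕ, ∃ hj : j < T.card, (π ⟨j, hj⟩).1 ∉ T' := by
          by_contra! hcon
          have hsub : T ⊆ T' := by
            intro e he
            obtain ⟨i, hi⟩ := π.surjective ⟨e, he⟩
            have := hcon i i.2
            rwa [Fin.eta, hi] at this
          have hc : ∀ S, IsSpanningTree G S → S.card + 1 = Nat.card V := by
            intro S hS
            have := (isTree_iff_connected_and_card (G := spanGraph S)).1 ⟨hS.2.1, hS.2.2⟩
            rw [← this.2, mem_edgeSet_spanGraph hS.1]
            simp only [Nat.card_coe_set_eq, Set.ncard_coe_finset]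
          have h1 := hc T hT
          have h2 := hc T' hT'
          exact hne (Finset.eq_of_subset_of_card_le hsub (by omega)).symm
        obtain ⟨hj, hjT⟩ := Nat.find_spec hex
        have hmin := fun i => @Nat.find_min _ _ hex i
        set j : Fin T.card := ⟨Nat.find hex, hj⟩ with hjdef
        obtain ⟨g, hgT, hgb, hs⟩ := exchange hT' (mem_boundary_self hT π j) hjT
        refine ⟨_, hs, ?_⟩
        have hE := treeWeight_exchange w (edg hT π j) ⟨g, hT'.1 hgT⟩ hjT hgT
        have hlt := h j ⟨g, hT'.1 hgT⟩ (by simpa [bdFin] using hgb)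
          (fun h => hjT (by
            have : g = (π j).1 := congrArg Subtype.val h
            rwa [← this]))
        have hE' : treeWeight G w (insert (π j).1 (T'.erase g)) =
          treeWeight G w T' + w (edg hT π j) - w ⟨g, hT'.1 hgT⟩ := hE
        rw [hE']
        linarith
      obtain ⟨M, hM, hMmin⟩ := Set.exists_min_image {S | IsSpanningTree G S} (treeWeight G w)
        (Set.toFinite _) ⟨T, hT⟩
      have hMT : M = T := by
        by_contra hne
        obtain ⟨S, hS, hlt⟩ := hstep M hM hne
        exact absurd (hMmin S hS) (not_le.2 hlt)
      subst hMT
      intro T' hT' hne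
      obtain ⟨S, hS, hlt⟩ := hstep T' hT' hne
      exact (hMmin S hS).trans_lt hlt
    · intro i j e e' hij he he'
      have h1 : e = edg hT π i := Subtype.ext he
      have h2 : e' = edg hT π j := Subtype.ext he'
      subst h1 h2
      refine h i _ ?_ ?_
      · have := boundary_anti G (initialForest_mono π (i := i) (j := j) hij.le)
          (mem_boundary_self hT π j)
        simpa [bdFin, edg] using this
      · intro h'
        have : π j = π i := Subtype.ext (Subtype.ext_iff.1 h' :)
        exact hij.ne' (π.injective this)

lemma order_prob [Fintype V] {G : SimpleGraph V} {T : Finset (Sym2 V)}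
    (hT : IsSpanningTree G T) (π : Fin T.card ≃ ↥T) :
    MeasurableSet (mstEvent G T ∩ orderEvent G (fun i => (π i).1)) ∧
    edgeUniform G.edgeSet (mstEvent G T ∩ orderEvent G fun i => (π i).1)
      = ∏ i, ((bdFin G T π i).card : ENNReal)⁻¹ := by
  have heq : mstEvent G T ∩ orderEvent G (fun i => (π i).1)
      = chainEvent (fun _ => Set.univ) (bdFin G T π) (edg hT π) := by
    ext w
    rw [event_iff hT π w]
    simp [chainEvent]
  refine ⟨?_, ?_⟩
  · rw [heq]; exact chain_measurable _ (fun _ => MeasurableSet.univ) _ _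
  rw [heq, chain_prob T.card (bdFin G T π) (edg hT π) ?_ ?_ (fun _ => Set.univ)
    (fun _ => MeasurableSet.univ) Set.univ good_univ (fun _ _ _ => rfl)]
  · simp
  · intro i
    simpa [bdFin, edg] using mem_boundary_self hT π i
  · intro i j hij f hf
    have hf : (f : Sym2 V) ∈ boundary G (initialForest T π j) := by simpa [bdFin] using hf
    refine (@Finset.mem_erase _ (_) _ _ _).2 ⟨?_, ?_⟩
    · rintro rfl
      exact hf.2.1 (mem_initialForest.2 ⟨i, hij, rfl⟩)
    · simpa [bdFin] using boundary_anti G (initialForest_mono π (i := i) (j := j) hij.le) hf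

lemma order_unique [Fintype V] {G : SimpleGraph V} {T : Finset (Sym2 V)}
    (hT : IsSpanningTree G T) (π σ : Fin T.card ≃ ↥T) (w : G.edgeSet → ℝ)
    (hπ : w ∈ orderEvent G (fun i => (π i).1)) (hσ : w ∈ orderEvent G (fun i => (σ i).1)) :
    π = σ := by
  have h1 : StrictMono fun i => w (edg hT π i) := fun i j hij => hπ i j _ _ hij rfl rfl
  have h2 : StrictMono fun i => w (edg hT σ i) := fun i j hij => hσ i j _ _ hij rfl rfl
  have hr : ∀ ρ : Fin T.card ≃ ↥T, Set.range (fun i => w (edg hT ρ i))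
      = Set.range fun t : ↥T => w ⟨t.1, hT.1 t.2⟩ := fun ρ =>
    ρ.surjective.range_comp (fun t : ↥T => w ⟨t.1, hT.1 t.2⟩)
  have h3 := (StrictMono.range_inj h1 h2).1 ((hr π).trans (hr σ).symm)
  ext i : 1
  obtain ⟨k, hk⟩ := σ.surjective (π i)
  have h4 : w (edg hT σ i) = w (edg hT σ k) := by
    rw [← congrFun h3 i]
    exact congrArg w (Subtype.ext (by simp [edg, hk]))
  have h5 : i = k := h2.injective h4
  subst h5
  exact hk.symm

lemma order_exists [Fintype V] {G : SimpleGraph V} {T : Finset (Sym2 V)}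
    (hT : IsSpanningTree G T) (w : G.edgeSet → ℝ) (hw : Function.Injective w) :
    ∃ π : Fin T.card ≃ ↥T, w ∈ orderEvent G (fun i => (π i).1) := by
  let ρ : Fin T.card ≃ ↥T := T.equivFin.symm
  let φ : Fin T.card → ℝ := fun i => w (edg hT ρ i)
  refine ⟨(Tuple.sort φ).trans ρ, ?_⟩
  intro i j e e' hij he he'
  have hm : φ (Tuple.sort φ i) ≤ φ (Tuple.sort φ j) := Tuple.monotone_sort φ hij.le
  have h1 : e = edg hT ρ (Tuple.sort φ i) := Subtype.ext he
  have h2 : e' = edg hT ρ (Tuple.sort φ j) := Subtype.ext he'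
  refine lt_of_le_of_ne (by rw [h1, h2]; exact hm) fun h => ?_
  have h3 : (edg hT ρ (Tuple.sort φ i)) = edg hT ρ (Tuple.sort φ j) := by
    rw [← h1, ← h2]; exact hw h
  have h4 : ρ (Tuple.sort φ i) = ρ (Tuple.sort φ j) := Subtype.ext (Subtype.ext_iff.1 h3 :)
  exact hij.ne ((Tuple.sort φ).injective (ρ.injective h4))

/-- The internal formula: for a spanning tree `T` of a finite connected graph `G` and any
ordering `π` of the tree edges, the probability that `T` is the unique MST with the
tree-edge weights in order `π` equals `∏_{j=0}^{n-2} 1/|∂F_j|`; summing over all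
orderings gives `P_MST(T; G)`. -/
theorem internal_formula [Fintype V] (G : SimpleGraph V) (hG : G.Connected)
    (T : Finset (Sym2 V)) (hT : IsSpanningTree G T) :
    (∀ π : Fin T.card ≃ ↥T,
      (edgeUniform G.edgeSet
          (mstEvent G T ∩ orderEvent G fun i => (π i).1)).toReal
        = ∏ j ∈ Finset.range T.card,
            1 / ((boundary G (initialForest T π j)).ncard : ℝ)) ∧
    mstProb G T = ∑ π : Fin T.card ≃ ↥T, ∏ j ∈ Finset.range T.card,
      1 / ((boundary G (initialForest T π j)).ncard : ℝ) := by
  have hone : ∀ π : Fin T.card ≃ ↥T,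
      (edgeUniform G.edgeSet (mstEvent G T ∩ orderEvent G fun i => (π i).1)).toReal
        = ∏ j ∈ Finset.range T.card,
            1 / ((boundary G (initialForest T π j)).ncard : ℝ) := by
    intro π
    rw [(order_prob hT π).2, ENNReal.toReal_prod, Finset.prod_range]
    refine Finset.prod_congr rfl fun i _ => ?_
    rw [bdFin_card, ENNReal.toReal_inv, ENNReal.toReal_natCast, one_div]
  refine ⟨hone, ?_⟩
  have hae : mstEvent G T =ᵐ[edgeUniform G.edgeSet]
      ⋃ π : Fin T.card ≃ ↥T, (mstEvent G T ∩ orderEvent G fun i => (π i).1) := by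
    filter_upwards [ae_injective (E := G.edgeSet)] with w hw
    refine propext ⟨fun h => ?_, fun h => ?_⟩
    · obtain ⟨π, hπ⟩ := order_exists hT w hw
      exact Set.mem_iUnion.2 ⟨π, h, hπ⟩
    · obtain ⟨π, hπ⟩ := Set.mem_iUnion.1 h
      exact hπ.1
  rw [mstProb, measure_congr hae, measure_iUnion, tsum_fintype,
    ENNReal.toReal_sum (fun π _ => measure_ne_top _ _)]
  · exact Finset.sum_congr rfl fun π _ => hone π
  · intro π σ hne
    refine Set.disjoint_left.2 fun w h1 h2 => hne ?_
    exact order_unique hT π σ w h1.2 h2.2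
  · exact fun π => (order_prob hT π).1

end RST
end
end
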